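/- arXiv:2404.15921 — 8 statements merged into one kernel-verified Lean document; each statement's English description precedes it below -/
import Mathlib

section
/- Let ℓ > 0 and let ρ be a real number with |ρ| ≤ arsinh(1/sinh(ℓ/2)). Then ℓ·cosh ρ ≤ 2·√(1 + sinh(ℓ/2)²). If moreover ℓ ≤ 2·arsinh(1), then ℓ·cosh ρ ≤ 2·√2. -/
/-- circles in the collar neighbourhood have length at most
`2√(1 + sinh(ℓ/2)²)`, and at most `2√2` when `ℓ ≤ 2 arsinh 1`. -/
theorem collar_circle_length (ℓ ρ : ℝ) (hℓ : 0 < ℓ)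
    (hρ : |ρ| ≤ Real.arsinh (1 / Real.sinh (ℓ / 2))) :
    ℓ * Real.cosh ρ ≤ 2 * Real.sqrt (1 + Real.sinh (ℓ / 2) ^ 2) ∧
      (ℓ ≤ 2 * Real.arsinh 1 → ℓ * Real.cosh ρ ≤ 2 * Real.sqrt 2) := by
  have hs : ℓ / 2 ≤ Real.sinh (ℓ / 2) := Real.self_le_sinh_iff.2 (by linarith)
  have hs0 : 0 < Real.sinh (ℓ / 2) := by linarith
  have h1 : ℓ * Real.cosh ρ ≤ 2 * Real.sqrt (1 + Real.sinh (ℓ / 2) ^ 2) := by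
    have hc : Real.cosh ρ ≤ Real.sqrt (1 + (1 / Real.sinh (ℓ / 2)) ^ 2) := by
      rw [← Real.cosh_arsinh]
      exact Real.cosh_le_cosh.2 (hρ.trans (le_abs_self _))
    have he : Real.sinh (ℓ / 2) * Real.sqrt (1 + (1 / Real.sinh (ℓ / 2)) ^ 2)
        = Real.sqrt (1 + Real.sinh (ℓ / 2) ^ 2) := by
      have h2 : 1 + Real.sinh (ℓ / 2) ^ 2
          = Real.sinh (ℓ / 2) ^ 2 * (1 + (1 / Real.sinh (ℓ / 2)) ^ 2) := by
        field_simp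
        ring
      rw [h2, Real.sqrt_mul (sq_nonneg _), Real.sqrt_sq hs0.le]
    have h3 : ℓ / 2 * Real.cosh ρ ≤ Real.sinh (ℓ / 2) *
        Real.sqrt (1 + (1 / Real.sinh (ℓ / 2)) ^ 2) :=
      mul_le_mul hs hc (Real.cosh_pos _).le hs0.le
    linarith
  refine ⟨h1, fun h => h1.trans ?_⟩
  have h4 : Real.sinh (ℓ / 2) ≤ 1 := by
    rw [← Real.sinh_arsinh 1]
    exact Real.sinh_le_sinh.2 (by linarith)
  have h5 : Real.sqrt (1 + Real.sinh (ℓ / 2) ^ 2) ≤ Real.sqrt 2 :=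
    Real.sqrt_le_sqrt (by nlinarith)
  linarith
end

section
/- For every point z of the hyperbolic upper half-plane, the hyperbolic distance from z to the imaginary axis equals arsinh(|re z| / im z); that is, the metric infimum distance from z to the set { w in the upper half-plane : re w = 0 } is arsinh(|re z| / im z). -/
/-- the hyperbolic distance from a point `z` of the upper half-plane to the
imaginary axis equals `arsinh (|re z| / im z)`. -/
theorem infDist_imaginary_axis (z : UpperHalfPlane) :
    Metric.infDist z {w : UpperHalfPlane | w.re = 0} = Real.arsinh (|z.re| / z.im) := by
  have hy : 0 < z.im := z.im_pos
  obtain ⟨R, hR⟩ : ∃ R, R = Real.sqrt (z.re ^ 2 + z.im ^ 2) := ⟨_, rfl⟩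
  have hRpos : 0 < R := by rw [hR]; positivity
  have hR2 : R ^ 2 = z.re ^ 2 + z.im ^ 2 := by
    rw [hR]; exact Real.sq_sqrt (by positivity)
  have hc : Real.cosh (Real.arsinh (|z.re| / z.im)) = R / z.im := by
    rw [Real.cosh_arsinh]
    rw [Real.sqrt_eq_iff_mul_self_eq (by positivity) (by positivity)]
    rw [div_pow, sq_abs]
    field_simp
    linarith
  have ha : 0 ≤ Real.arsinh (|z.re| / z.im) := Real.arsinh_nonneg_iff.2 (by positivity)
  obtain ⟨w, hwre, hwim⟩ : ∃ w : UpperHalfPlane, w.re = 0 ∧ w.im = R :=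
    ⟨⟨⟨0, R⟩, hRpos⟩, rfl, rfl⟩
  apply le_antisymm
  · refine (Metric.infDist_le_dist_of_mem (y := w) hwre).trans ?_
    rw [← abs_of_nonneg ha, ← abs_of_nonneg (dist_nonneg (x := z) (y := w)), ← Real.cosh_le_cosh,
      hc, UpperHalfPlane.cosh_dist', hwre, hwim]
    apply le_of_eq
    field_simp
    linarith
  · rw [Metric.le_infDist ⟨w, hwre⟩]
    intro v hv
    have hv : v.re = 0 := hv
    have hvp : 0 < v.im := v.im_pos
    rw [← abs_of_nonneg ha, ← abs_of_nonneg (dist_nonneg (x := z) (y := v)), ← Real.cosh_le_cosh,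
      hc, UpperHalfPlane.cosh_dist', hv, div_le_div_iff₀ hy (by positivity)]
    nlinarith [mul_nonneg hy.le (sq_nonneg (R - v.im))]
end

section
/- Let a, b, c > 0 and let L ≥ 0 satisfy cosh L = F(a,b,c). Then L ≥ log( (cosh(a/2)·cosh(b/2)) / (sinh(a/2)·sinh(b/2)) ); in particular L ≥ log( cosh(a/2)/sinh(a/2) ). -/
/-- The right-angled hexagon expression: `cosh` of the length of the common perpendicular
between the boundary components of lengths `a` and `b` in a pair of pants with boundary
lengths `a`, `b`, `c`. -/
noncomputable def pantsPerp (a b c : ℝ) : ℝ :=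
  (Real.cosh (c / 2) + Real.cosh (a / 2) * Real.cosh (b / 2)) /
    (Real.sinh (a / 2) * Real.sinh (b / 2))

/-- lower bound for the length of the common perpendicular. -/
theorem perp_length_lower_bound (a b c L : ℝ) (ha : 0 < a) (hb : 0 < b) (hc : 0 < c)
    (hL : 0 ≤ L) (h : Real.cosh L = pantsPerp a b c) :
    L ≥ Real.log ((Real.cosh (a / 2) * Real.cosh (b / 2)) /
        (Real.sinh (a / 2) * Real.sinh (b / 2))) ∧
      L ≥ Real.log (Real.cosh (a / 2) / Real.sinh (a / 2)) := by
  have sa : 0 < Real.sinh (a / 2) := Real.sinh_pos_iff.2 (by linarith)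
  have sb : 0 < Real.sinh (b / 2) := Real.sinh_pos_iff.2 (by linarith)
  have ca := Real.cosh_pos (a / 2)
  have cb := Real.cosh_pos (b / 2)
  have cc := Real.cosh_pos (c / 2)
  have lb : Real.sinh (b / 2) < Real.cosh (b / 2) := Real.sinh_lt_cosh _
  have hexp : Real.cosh L ≤ Real.exp L := by
    have h1 := Real.cosh_add_sinh L
    have h2 : 0 ≤ Real.sinh L := Real.sinh_nonneg_iff.2 hL
    linarith
  have h1 : (Real.cosh (a / 2) * Real.cosh (b / 2)) /
      (Real.sinh (a / 2) * Real.sinh (b / 2)) ≤ Real.exp L := by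
    refine le_trans ?_ hexp
    rw [h, pantsPerp]
    exact div_le_div_of_nonneg_right (by linarith) (by positivity)
  have h2 : Real.cosh (a / 2) / Real.sinh (a / 2) ≤ Real.exp L := by
    refine le_trans ?_ h1
    rw [div_le_div_iff₀ sa (by positivity)]
    nlinarith [mul_pos (mul_pos ca sa) (sub_pos.2 lb)]
  exact ⟨(Real.log_le_iff_le_exp (by positivity)).2 h1,
    (Real.log_le_iff_le_exp (by positivity)).2 h2⟩
end

section
/- Let 0 < a ≤ a', 0 < b ≤ b', and 0 < c ≤ c' be real numbers. Then F(a,b,c) / F(a',b',c') ≤ ( sinh(a'/2)·sinh(b'/2) ) / ( sinh(a/2)·sinh(b/2) ). -/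
/-- comparison of perpendicular lengths when the boundary lengths are
weakly increased. -/
theorem perp_ratio_bound (a a' b b' c c' : ℝ)
    (ha : 0 < a) (ha' : a ≤ a') (hb : 0 < b) (hb' : b ≤ b') (hc : 0 < c) (hc' : c ≤ c') :
    pantsPerp a b c / pantsPerp a' b' c' ≤
      (Real.sinh (a' / 2) * Real.sinh (b' / 2)) / (Real.sinh (a / 2) * Real.sinh (b / 2)) := by
  have key : ∀ x y : ℝ, 0 < x → x ≤ y → Real.cosh (x / 2) ≤ Real.cosh (y / 2) := by
    intro x y hx hxy
    rw [Real.cosh_le_cosh, abs_of_pos (by linarith), abs_of_pos (by linarith)]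
    linarith
  have h1 := key a a' ha ha'
  have h2 := key b b' hb hb'
  have h3 := key c c' hc hc'
  have sa : 0 < Real.sinh (a / 2) := Real.sinh_pos_iff.2 (by linarith)
  have sb : 0 < Real.sinh (b / 2) := Real.sinh_pos_iff.2 (by linarith)
  have sa' : 0 < Real.sinh (a' / 2) := Real.sinh_pos_iff.2 (by linarith)
  have sb' : 0 < Real.sinh (b' / 2) := Real.sinh_pos_iff.2 (by linarith)
  have ca := Real.cosh_pos (a / 2)
  have cb := Real.cosh_pos (b / 2)
  have ca' := Real.cosh_pos (a' / 2)
  have cb' := Real.cosh_pos (b' / 2)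
  have cc := Real.cosh_pos (c / 2)
  have cc' := Real.cosh_pos (c' / 2)
  have hN : Real.cosh (c / 2) + Real.cosh (a / 2) * Real.cosh (b / 2) ≤
      Real.cosh (c' / 2) + Real.cosh (a' / 2) * Real.cosh (b' / 2) :=
    add_le_add h3 (mul_le_mul h1 h2 cb.le ca'.le)
  have hP : 0 < Real.cosh (c' / 2) + Real.cosh (a' / 2) * Real.cosh (b' / 2) := by positivity
  unfold pantsPerp
  have hS : 0 < Real.sinh (a / 2) * Real.sinh (b / 2) := mul_pos sa sb
  have hS' : 0 < Real.sinh (a' / 2) * Real.sinh (b' / 2) := mul_pos sa' sb'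
  generalize Real.cosh (c / 2) + Real.cosh (a / 2) * Real.cosh (b / 2) = N at *
  generalize Real.cosh (c' / 2) + Real.cosh (a' / 2) * Real.cosh (b' / 2) = M at *
  generalize Real.sinh (a / 2) * Real.sinh (b / 2) = S at *
  generalize Real.sinh (a' / 2) * Real.sinh (b' / 2) = T at *
  rw [div_le_iff₀ (div_pos hP hS')]
  have e : T / S * (M / T) = M / S := by field_simp
  rw [e]
  exact div_le_div_of_nonneg_right hN hS.le
end

section
/- Let a₀ := exp(−√2) and m := log( cosh(a₀/2) / sinh(a₀/2) ). There exists a constant C > 0 such that for all real numbers s, x, y with 0 < s ≤ a₀, y ≥ m, and x − y ≤ log 2 + 2·log( sinh(a₀/2) / sinh(s/2) ), one has x ≤ C·(−log s)·y. -/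
/-- The universal constant `a₀ = exp (-√2)` of the paper's Convention. -/
noncomputable def a₀ : ℝ := Real.exp (-Real.sqrt 2)

/-- The lower bound `m = log (cosh (a₀/2) / sinh (a₀/2))` for the perpendicular length. -/
noncomputable def mConst : ℝ := Real.log (Real.cosh (a₀ / 2) / Real.sinh (a₀ / 2))

/-- the real-variable form of estimate (9) in the proof of Lemma 3.1. -/
theorem perp_ratio_log_sys_bound :
    ∃ C : ℝ, 0 < C ∧ ∀ s x y : ℝ, 0 < s → s ≤ a₀ → mConst ≤ y →
      x - y ≤ Real.log 2 + 2 * Real.log (Real.sinh (a₀ / 2) / Real.sinh (s / 2)) →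
      x ≤ C * (-Real.log s) * y := by
  have ha : 0 < a₀ := Real.exp_pos _
  have hsa : 0 < Real.sinh (a₀ / 2) := Real.sinh_pos_iff.2 (by linarith)
  have hm : 0 < mConst := by
    unfold mConst
    apply Real.log_pos
    rw [one_lt_div hsa]
    exact Real.sinh_lt_cosh _
  obtain ⟨K, hK⟩ : ∃ K, K = |Real.log (Real.sinh (a₀ / 2)) + Real.log 2| := ⟨_, rfl⟩
  have hK0 : 0 ≤ K := hK ▸ abs_nonneg _
  have hKle : Real.log (Real.sinh (a₀ / 2)) + Real.log 2 ≤ K := hK ▸ le_abs_self _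
  have hl2 : 0 < Real.log 2 := Real.log_pos (by norm_num)
  refine ⟨1 + (Real.log 2 + 2 + 2 * K) / mConst, by positivity, ?_⟩
  intro s x y hs hsa0 hy hx
  have hL : 1 ≤ -Real.log s := by
    have h1 : Real.log s ≤ -Real.sqrt 2 := by
      have := Real.log_le_log hs hsa0
      rwa [a₀, Real.log_exp] at this
    have h2 : (1 : ℝ) ≤ Real.sqrt 2 := Real.one_le_sqrt.2 (by norm_num)
    linarith
  have hss : s / 2 ≤ Real.sinh (s / 2) := Real.self_le_sinh_iff.2 (by linarith)
  have hs2 : 0 < s / 2 := by linarith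
  have h3 := Real.log_le_log hs2 hss
  rw [Real.log_div hs.ne' (by norm_num)] at h3
  rw [Real.log_div hsa.ne' (by linarith)] at hx
  obtain ⟨L, hLd⟩ : ∃ L, L = -Real.log s := ⟨_, rfl⟩
  rw [← hLd] at hL ⊢
  have h4 : x ≤ y + Real.log 2 + 2 * L + 2 * K := by linarith
  obtain ⟨D, hD⟩ : ∃ D, D = Real.log 2 + 2 + 2 * K := ⟨_, rfl⟩
  have hD0 : 0 ≤ D := by rw [hD]; positivity
  have h5 : x ≤ L * y + D * L := by
    rw [hD]
    nlinarith [mul_nonneg (sub_nonneg.2 hL) (hm.le.trans hy), mul_nonneg (sub_nonneg.2 hL) hl2.le,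
      mul_nonneg (sub_nonneg.2 hL) hK0]
  rw [← hD]
  have h6 : D * L ≤ D / mConst * L * y := by
    have : D * L = D / mConst * L * mConst := by field_simp
    rw [this]
    have : 0 ≤ D / mConst * L := by positivity
    gcongr
  linarith
end

section
/- For every m > 0 there exist constants c₂ ≥ c₁ > 0, depending only on m, with the following property: for all real numbers ρ₁, ρ₂, all h ≥ m, and all L ≥ 0 satisfying cosh L = cosh ρ₁ · cosh ρ₂ · cosh h − sinh ρ₁ · sinh ρ₂, one has c₁·( |ρ₁| + |ρ₂| + h ) ≤ L ≤ c₂·( |ρ₁| + |ρ₂| + h ). -/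
/-- two-sided comparison of the length `L` of a geodesic arc with
`|ρ₁| + |ρ₂| + h`, with constants depending only on the lower bound `m ≤ h`. -/
theorem arc_length_two_sided_comparison (m : ℝ) (hm : 0 < m) :
    ∃ c₁ c₂ : ℝ, 0 < c₁ ∧ c₁ ≤ c₂ ∧
      ∀ ρ₁ ρ₂ h L : ℝ, m ≤ h → 0 ≤ L →
        Real.cosh L =
          Real.cosh ρ₁ * Real.cosh ρ₂ * Real.cosh h - Real.sinh ρ₁ * Real.sinh ρ₂ →
        c₁ * (|ρ₁| + |ρ₂| + h) ≤ L ∧ L ≤ c₂ * (|ρ₁| + |ρ₂| + h) := by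
  have hd : 0 < (Real.cosh m - 1) / 4 := by
    have := Real.one_lt_cosh.2 hm.ne'
    linarith
  obtain ⟨K, hK⟩ : ∃ K, K = Real.log ((Real.cosh m - 1) / 4) := ⟨_, rfl⟩
  have hKe : Real.exp K = (Real.cosh m - 1) / 4 := by rw [hK, Real.exp_log hd]
  have hq : 0 ≤ |K| / m := by positivity
  have hD : 0 < 2 + |K| / m := by positivity
  refine ⟨1 / (2 + |K| / m), 1, by positivity, ?_, ?_⟩
  · rw [div_le_one hD]; linarith
  intro ρ₁ ρ₂ h L hmh hL hc
  have hh : 0 < h := by linarith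
  obtain ⟨a, ha⟩ : ∃ a, a = |ρ₁| := ⟨_, rfl⟩
  obtain ⟨b, hb⟩ : ∃ b, b = |ρ₂| := ⟨_, rfl⟩
  have ha0 : 0 ≤ a := ha ▸ abs_nonneg _
  have hb0 : 0 ≤ b := hb ▸ abs_nonneg _
  have hca : Real.cosh ρ₁ = Real.cosh a := by rw [ha, Real.cosh_abs]
  have hcb : Real.cosh ρ₂ = Real.cosh b := by rw [hb, Real.cosh_abs]
  have hs : |Real.sinh ρ₁ * Real.sinh ρ₂| = Real.sinh a * Real.sinh b := by
    rw [abs_mul, Real.abs_sinh, Real.abs_sinh, ha, hb]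
  have hs1 := neg_abs_le (Real.sinh ρ₁ * Real.sinh ρ₂)
  have hs2 := le_abs_self (Real.sinh ρ₁ * Real.sinh ρ₂)
  rw [hs] at hs1 hs2
  rw [hca, hcb] at hc
  rw [← ha, ← hb]
  have sa : 0 ≤ Real.sinh a := Real.sinh_nonneg_iff.2 ha0
  have sb : 0 ≤ Real.sinh b := Real.sinh_nonneg_iff.2 hb0
  have sh : 0 ≤ Real.sinh h := Real.sinh_nonneg_iff.2 hh.le
  have ca := Real.one_le_cosh a
  have cb := Real.one_le_cosh b
  have ch := Real.one_le_cosh h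
  have hab : 1 ≤ Real.cosh a * Real.cosh b := one_le_mul_of_one_le_of_one_le ca cb
  have hsub := Real.one_le_cosh (a - b)
  rw [Real.cosh_sub] at hsub
  have hss := mul_nonneg sa sb
  have hLh : h ≤ L := by
    have : Real.cosh h ≤ Real.cosh L := by nlinarith
    rwa [Real.cosh_le_cosh, abs_of_pos hh, abs_of_nonneg hL] at this
  have hup : L ≤ a + b + h := by
    have : Real.cosh L ≤ Real.cosh (a + b + h) := by
      have h0 : 0 ≤ Real.sinh (a + b) := Real.sinh_nonneg_iff.2 (by linarith)
      rw [Real.cosh_add (a + b) h, Real.cosh_add a b]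
      have := mul_nonneg h0 sh
      nlinarith
    rwa [Real.cosh_le_cosh, abs_of_nonneg hL, abs_of_nonneg (by linarith)] at this
  refine ⟨?_, by linarith⟩
  have hlow : a + b + K ≤ L := by
    rw [← Real.exp_le_exp, Real.exp_add, Real.exp_add, hKe]
    have e1 : Real.cosh L ≤ Real.exp L := by
      have := Real.cosh_add_sinh L
      have := Real.sinh_nonneg_iff.2 hL
      linarith
    have e2 : Real.exp a ≤ 2 * Real.cosh a := by
      rw [Real.cosh_eq]; have := Real.exp_pos (-a); linarith
    have e3 : Real.exp b ≤ 2 * Real.cosh b := by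
      rw [Real.cosh_eq]; have := Real.exp_pos (-b); linarith
    have e4 : Real.cosh m ≤ Real.cosh h := by
      rwa [Real.cosh_le_cosh, abs_of_pos hh, abs_of_pos hm]
    have e5 : Real.exp a * Real.exp b ≤ (2 * Real.cosh a) * (2 * Real.cosh b) :=
      mul_le_mul e2 e3 (Real.exp_pos b).le (by linarith)
    have e6 := mul_le_mul_of_nonneg_right e5 hd.le
    have e7 : Real.cosh a * Real.cosh b * Real.cosh m ≤ Real.cosh a * Real.cosh b * Real.cosh h :=
      mul_le_mul_of_nonneg_left e4 (by linarith)
    linarith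
  have hKL : |K| ≤ |K| / m * L := by
    have : |K| / m * m = |K| := by field_simp
    have := mul_le_mul_of_nonneg_left (hmh.trans hLh) hq
    linarith
  have := neg_abs_le K
  rw [one_div, inv_mul_le_iff₀ hD]
  linarith
end

section
/- Let 0 < a ≤ a', 0 ≤ c ≤ c', 0 ≤ d ≤ d' be real numbers, and let L ≥ 0 and L' ≥ 0 satisfy (cosh L)² = N(a,c,d)/sinh(a/2)² and (cosh L')² = N(a',c',d')/sinh(a'/2)². Then cosh L / cosh L' ≤ sinh(a'/2) / sinh(a/2). -/
/-- The quantity `N(a,c,d)` appearing in Case 2 of the proof of Lemma 3.1. -/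
noncomputable def pantsN (a c d : ℝ) : ℝ :=
  Real.cosh (d / 2) ^ 2 + Real.cosh (a / 2) ^ 2 + Real.cosh (c / 2) ^ 2 +
    2 * Real.cosh (d / 2) * Real.cosh (a / 2) * Real.cosh (c / 2) - 1

/-- estimate (13) in Case 2 of the proof of Lemma 3.1. -/
theorem cosh_ratio_le_sinh_ratio (a a' c c' d d' L L' : ℝ)
    (ha : 0 < a) (ha' : a ≤ a') (hc : 0 ≤ c) (hc' : c ≤ c') (hd : 0 ≤ d) (hd' : d ≤ d')
    (hL : 0 ≤ L) (hL' : 0 ≤ L')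
    (hcoshL : Real.cosh L ^ 2 = pantsN a c d / Real.sinh (a / 2) ^ 2)
    (hcoshL' : Real.cosh L' ^ 2 = pantsN a' c' d' / Real.sinh (a' / 2) ^ 2) :
    Real.cosh L / Real.cosh L' ≤ Real.sinh (a' / 2) / Real.sinh (a / 2) := by
  have hs : 0 < Real.sinh (a / 2) := Real.sinh_pos_iff.2 (by linarith)
  have hs' : 0 < Real.sinh (a' / 2) := Real.sinh_pos_iff.2 (by linarith)
  have mono : ∀ x y : ℝ, 0 ≤ x → x ≤ y → Real.cosh (x / 2) ≤ Real.cosh (y / 2) := by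
    intro x y hx hxy
    rw [Real.cosh_le_cosh, abs_of_nonneg (by linarith), abs_of_nonneg (by linarith)]
    linarith
  have h1 := mono a a' ha.le ha'
  have h2 := mono c c' hc hc'
  have h3 := mono d d' hd hd'
  have p1 := Real.cosh_pos (a / 2)
  have p2 := Real.cosh_pos (c / 2)
  have p3 := Real.cosh_pos (d / 2)
  have p1' := Real.cosh_pos (a' / 2)
  have p2' := Real.cosh_pos (c' / 2)
  have p3' := Real.cosh_pos (d' / 2)
  have hN : pantsN a c d ≤ pantsN a' c' d' := by
    unfold pantsN
    gcongr
  rw [eq_div_iff (by positivity), ← mul_pow] at hcoshL hcoshL'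
  rw [div_le_div_iff₀ (Real.cosh_pos _) hs, mul_comm (Real.sinh (a' / 2))]
  rw [← hcoshL, ← hcoshL'] at hN
  exact (le_abs_self _).trans (abs_le_of_sq_le_sq hN (mul_pos (Real.cosh_pos _) hs').le)
end

section
/- Let a > 0 be a real number with sinh(a/2) ≤ 2, let c and d be real numbers, and let L ≥ 0 satisfy (cosh L)² = N(a,c,d)/sinh(a/2)². Then N(a,c,d) ≥ 4, cosh L ≥ 2/sinh(a/2), and L ≥ log( 2 / sinh(a/2) ). -/
/-- the lower bound `L ≥ log (2 / sinh (a/2))` from Subcase 2-2 of the proof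
of Lemma 3.1. -/
theorem perp_self_lower_bound (a c d L : ℝ) (ha : 0 < a) (ha2 : Real.sinh (a / 2) ≤ 2)
    (hL : 0 ≤ L) (hcoshL : Real.cosh L ^ 2 = pantsN a c d / Real.sinh (a / 2) ^ 2) :
    4 ≤ pantsN a c d ∧ 2 / Real.sinh (a / 2) ≤ Real.cosh L ∧
      Real.log (2 / Real.sinh (a / 2)) ≤ L := by
  have hs : 0 < Real.sinh (a / 2) := Real.sinh_pos_iff.mpr (by linarith)
  have h4 : 4 ≤ pantsN a c d := by
    unfold pantsN
    have h1 := Real.one_le_cosh (d / 2)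
    have h2 := Real.one_le_cosh (a / 2)
    have h3 := Real.one_le_cosh (c / 2)
    have h12 : 1 ≤ Real.cosh (d / 2) * Real.cosh (a / 2) := by nlinarith
    have h123 : 1 ≤ Real.cosh (d / 2) * Real.cosh (a / 2) * Real.cosh (c / 2) := by nlinarith
    nlinarith
  have hc : 2 / Real.sinh (a / 2) ≤ Real.cosh L := by
    refine (pow_le_pow_iff_left₀ (by positivity) (Real.cosh_pos L).le two_ne_zero).mp ?_
    rw [hcoshL, div_pow]
    gcongr
    linarith
  refine ⟨h4, hc, ?_⟩
  rw [Real.log_le_iff_le_exp (by positivity)]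
  refine hc.trans ?_
  rw [Real.cosh_eq]
  have : Real.exp (-L) ≤ Real.exp L := Real.exp_le_exp.mpr (by linarith)
  linarith
end
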